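/- Let N ≥ 3 be an integer, f ≥ 3 an integer, and let (f_1,...,f_N) be a nondecreasing integer sequence with f_1 ≥ 3, f_N = f, and Φ(f_1,...,f_N) < 0. Then Φ(f_1,...,f_N) ≤ Φ(3,7,f) = -1/42 + 1/f. -/

import Mathlib

/-- Combinatorial curvature of a vertex pattern. -/
noncomputable def Phi (N : ℕ) (f : Fin N → ℕ) : ℝ :=
  1 - (N : ℝ) / 2 + ∑ i, (1 : ℝ) / (f i)

/-!
Single out one `f`-gon of the pattern. Since `1 / f ≥ 0`, the sum `1 - N / 2 + ∑ 1 / fⱼ` over the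
other faces is already negative, and it suffices to show that it is at most `-1 / 42`. Two unit
fractions whose sum is below `1 / 2` sum to at most `1 / 3 + 1 / 7 = 1 / 2 - 1 / 42`, and therefore
three whose sum is below `1` sum to at most `1 / 2 + 1 / 3 + 1 / 7 = 1 - 1 / 42`; this settles the
cases of two and three other faces. With four or more, bounding each term by `1 / 3` suffices.
-/

section UnitFractions

variable {K : Type*} [Field K] [LinearOrder K] [IsStrictOrderedRing K]

lemma one_div_natCast_le_one_div_ofNat {k n : ℕ} [k.AtLeastTwo] (h : OfNat.ofNat k ≤ n) :
    1 / (n : K) ≤ 1 / OfNat.ofNat k :=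
  one_div_le_one_div_of_le (Nat.ofNat_pos (n := k)) (Nat.ofNat_le_cast.2 h)

lemma ofNat_lt_of_one_div_natCast_lt {k n : ℕ} [k.AtLeastTwo] (hn : 0 < n)
    (h : 1 / (n : K) < 1 / OfNat.ofNat k) : OfNat.ofNat k < n :=
  Nat.ofNat_lt_cast.1 <| (one_div_lt_one_div (Nat.cast_pos.2 hn) (Nat.ofNat_pos (n := k))).1 h

lemma one_div_add_one_div_le_of_lt_half {a b : ℕ} (ha : 0 < a) (hb : 0 < b)
    (h : 1 / (a : K) + 1 / b < 1 / 2) : 1 / (a : K) + 1 / b ≤ 1 / 3 + 1 / 7 := by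
  wlog hab : a ≤ b generalizing a b
  · rw [add_comm] at h ⊢
    exact this hb ha h (le_of_not_ge hab)
  have hb0 : 0 < 1 / (b : K) := one_div_pos.2 (Nat.cast_pos.2 hb)
  have ha2 : 2 < a := ofNat_lt_of_one_div_natCast_lt (K := K) ha (by linarith)
  obtain rfl | rfl | ha5 : a = 3 ∨ a = 4 ∨ 5 ≤ a := by omega
  · rw [Nat.cast_ofNat] at h ⊢
    have hb6 : 6 < b := ofNat_lt_of_one_div_natCast_lt (K := K) hb (by linarith)
    have hb7 : 1 / (b : K) ≤ 1 / 7 := one_div_natCast_le_one_div_ofNat hb6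
    linarith
  · rw [Nat.cast_ofNat] at h ⊢
    have hb4 : 4 < b := ofNat_lt_of_one_div_natCast_lt (K := K) hb (by linarith)
    have hb5 : 1 / (b : K) ≤ 1 / 5 := one_div_natCast_le_one_div_ofNat hb4
    linarith
  · have ha5' : 1 / (a : K) ≤ 1 / 5 := one_div_natCast_le_one_div_ofNat ha5
    have hb5 : 1 / (b : K) ≤ 1 / 5 := one_div_natCast_le_one_div_ofNat (ha5.trans hab)
    linarith

lemma one_div_add_one_div_add_one_div_le_of_lt_one {a b c : ℕ} (ha : 0 < a) (hb : 0 < b)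
    (hc : 0 < c) (h : 1 / (a : K) + 1 / b + 1 / c < 1) :
    1 / (a : K) + 1 / b + 1 / c ≤ 1 / 2 + 1 / 3 + 1 / 7 := by
  wlog hab : a ≤ b generalizing a b
  · rw [add_comm (1 / (a : K))] at h ⊢
    exact this hb ha h (le_of_not_ge hab)
  wlog hac : a ≤ c generalizing a c
  · have hca : c ≤ a := le_of_not_ge hac
    rw [add_right_comm, add_comm (1 / (a : K)), add_right_comm] at h ⊢
    exact this ha hc h (hca.trans hab) hca
  have hb0 : 0 < 1 / (b : K) := one_div_pos.2 (Nat.cast_pos.2 hb)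
  have hc0 : 0 < 1 / (c : K) := one_div_pos.2 (Nat.cast_pos.2 hc)
  obtain rfl | rfl | ha3 : a = 1 ∨ a = 2 ∨ 3 ≤ a := by omega
  · rw [Nat.cast_one] at h
    linarith
  · rw [Nat.cast_ofNat] at h ⊢
    have hbc : 1 / (b : K) + 1 / c ≤ 1 / 3 + 1 / 7 :=
      one_div_add_one_div_le_of_lt_half hb hc (by linarith)
    linarith
  · have ha3' : 1 / (a : K) ≤ 1 / 3 := one_div_natCast_le_one_div_ofNat ha3
    have hb3 : 1 / (b : K) ≤ 1 / 3 := one_div_natCast_le_one_div_ofNat (ha3.trans hab)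
    have hc3 : 1 / (c : K) ≤ 1 / 3 := one_div_natCast_le_one_div_ofNat (ha3.trans hac)
    have not_all_three : 4 ≤ a ∨ 4 ≤ b ∨ 4 ≤ c := by
      by_contra! hlt
      obtain ⟨rfl, rfl, rfl⟩ : a = 3 ∧ b = 3 ∧ c = 3 := by omega
      norm_num at h
    obtain h4 | h4 | h4 := not_all_three <;>
    · have := one_div_natCast_le_one_div_ofNat (K := K) h4
      linarith

lemma sum_one_div_natCast_le_of_lt_half_card_sub_one {ι : Type*} (s : Finset ι) (q : ι → ℕ)
    (h3 : ∀ j ∈ s, 3 ≤ q j) (h : ∑ j ∈ s, 1 / (q j : K) < ((s.card : K) - 1) / 2) :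
    ∑ j ∈ s, 1 / (q j : K) ≤ ((s.card : K) - 1) / 2 - 1 / 42 := by
  classical
  have hpos : ∀ j ∈ s, 0 < q j := fun j hj => three_pos.trans_le (h3 j hj)
  have hsum : 0 ≤ ∑ j ∈ s, 1 / (q j : K) := Finset.sum_nonneg fun j _ => by positivity
  have hcard : 1 < s.card := by
    have : (1 : K) < s.card := by linarith
    exact_mod_cast this
  obtain hs2 | hs3 | hs4 : s.card = 2 ∨ s.card = 3 ∨ 4 ≤ s.card := by omega
  · obtain ⟨x, y, hxy, rfl⟩ := Finset.card_eq_two.1 hs2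
    rw [hs2, Finset.sum_pair hxy, Nat.cast_ofNat] at h ⊢
    have := one_div_add_one_div_le_of_lt_half (K := K) (hpos x (by simp)) (hpos y (by simp))
      (by linarith)
    linarith
  · obtain ⟨x, y, z, hxy, hxz, hyz, rfl⟩ := Finset.card_eq_three.1 hs3
    have hsplit : ∑ j ∈ {x, y, z}, 1 / (q j : K) = 1 / (q x : K) + 1 / q y + 1 / q z := by
      rw [Finset.sum_insert (by simp [hxy, hxz]), Finset.sum_pair hyz, add_assoc]
    rw [hs3, hsplit, Nat.cast_ofNat] at h ⊢
    have := one_div_add_one_div_add_one_div_le_of_lt_one (K := K) (hpos x (by simp))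
      (hpos y (by simp)) (hpos z (by simp)) (by linarith)
    linarith
  · have hthird : ∑ j ∈ s, 1 / (q j : K) ≤ s.card * (1 / 3) := by
      rw [← nsmul_eq_mul]
      exact Finset.sum_le_card_nsmul s _ _ fun j hj => one_div_natCast_le_one_div_ofNat (h3 j hj)
    have : (4 : K) ≤ s.card := Nat.ofNat_le_cast.2 hs4
    linarith

end UnitFractions

lemma Phi_eq_add_one_div {N : ℕ} (p : Fin N → ℕ) (i : Fin N) :
    Phi N p = 1 - (N : ℝ) / 2 + ∑ j ∈ Finset.univ.erase i, (1 : ℝ) / p j + 1 / p i := by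
  rw [Phi, add_assoc, Finset.sum_erase_add _ _ (Finset.mem_univ i)]

lemma Phi_three_seven (f : ℕ) : Phi 3 ![3, 7, f] = -(1 / 42) + 1 / (f : ℝ) := by
  simp only [Phi, Fin.sum_univ_three, Matrix.cons_val, Nat.cast_ofNat]
  ring

theorem stmt13_general {N : ℕ} (p : Fin N → ℕ) (h3 : ∀ i, 3 ≤ p i) (hneg : Phi N p < 0)
    (i : Fin N) : Phi N p ≤ Phi 3 ![3, 7, p i] := by
  have hi : 0 ≤ 1 / (p i : ℝ) := by positivity
  have hcard : ((Finset.univ.erase i).card : ℝ) + 1 = N := by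
    have := Finset.card_erase_add_one (Finset.mem_univ i)
    rw [Finset.card_fin] at this
    exact_mod_cast this
  rw [Phi_eq_add_one_div p i] at hneg ⊢
  rw [Phi_three_seven]
  have hothers := sum_one_div_natCast_le_of_lt_half_card_sub_one (K := ℝ) (Finset.univ.erase i) p
    (fun j _ => h3 j) (by linarith)
  linarith

/-- Any negatively curved vertex pattern whose largest entry is `f` has
curvature at most `Φ(3,7,f) = -1/42 + 1/f`. -/
theorem stmt13 (N : ℕ) (hN : 3 ≤ N) (f : ℕ) (hf : 3 ≤ f)
    (p : Fin N → ℕ) (hmono : Monotone p) (h3 : ∀ i, 3 ≤ p i)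
    (hlast : p ⟨N - 1, by omega⟩ = f) (hneg : Phi N p < 0) :
    Phi N p ≤ -(1 / 42) + 1 / (f : ℝ) ∧
      Phi 3 ![3, 7, f] = -(1 / 42) + 1 / (f : ℝ) := by
  have hle := hlast ▸ stmt13_general p h3 hneg ⟨N - 1, by omega⟩
  exact ⟨hle.trans_eq (Phi_three_seven f), Phi_three_seven f⟩
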